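/- Let M_UPL be the submonoid of binary relations on the 28-element set H of major, minor, and augmented triads generated by the parsimonious relations U, P, L. The set of invertible elements (units) of M_UPL is exactly {1, L, P, L·P, P·L, L·P·L}, and this group of units is isomorphic to the dihedral group of order 6 (DihedralGroup 3). -/

import Mathlib

/-- The 28-element set of the 24 major and minor triads and the 4 augmented triads:
`Sum.inl n` is the major triad `n_M`, `Sum.inr (Sum.inl n)` is the minor triad `n_m`,
and `Sum.inr (Sum.inr k)` is the augmented triad `k_aug`. -/
abbrev Htriads : Type := (ZMod 12) ⊕ (ZMod 12) ⊕ (ZMod 4)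

/-- Binary relations on `Htriads`. -/
abbrev MRel : Type := Htriads → Htriads → Prop

/-- The monoid of binary relations on `Htriads`: `r * s` relates `x` to `z` iff there is `y`
with `x r y` and `y s z` (i.e. first apply `r`, then `s`), and `1` is the equality relation. -/
instance : Monoid MRel where
  one := fun x y => x = y
  mul := fun r s => fun x z => ∃ y, r x y ∧ s y z
  mul_assoc r s t := by
    funext x z
    apply propext
    constructor
    · rintro ⟨y, ⟨w, hw1, hw2⟩, hy⟩
      exact ⟨w, hw1, y, hw2, hy⟩
    · rintro ⟨w, hw1, y, hy1, hy2⟩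
      exact ⟨y, ⟨w, hw1, hy1⟩, hy2⟩
  one_mul r := by
    funext x z
    apply propext
    constructor
    · rintro ⟨y, rfl, h⟩
      exact h
    · intro h
      exact ⟨x, rfl, h⟩
  mul_one r := by
    funext x z
    apply propext
    constructor
    · rintro ⟨y, h, rfl⟩
      exact h
    · intro h
      exact ⟨z, h, rfl⟩

/-- The major triad on root `n`. -/
def maj (n : ZMod 12) : Htriads := Sum.inl n
/-- The minor triad on root `n`. -/
def mino (n : ZMod 12) : Htriads := Sum.inr (Sum.inl n)
/-- The augmented triad `k_aug`, `k ∈ ℤ/4`. -/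
def aug (k : ZMod 4) : Htriads := Sum.inr (Sum.inr k)

/-- Reduction mod 4 of a pitch class mod 12. -/
def m4 (n : ZMod 12) : ZMod 4 := ZMod.castHom (show (4:ℕ) ∣ 12 by norm_num) (ZMod 4) n

/-- The relation `𝒰`: the symmetric relation relating exactly `n_M` with `(n mod 4)_aug`
and `n_m` with `((n+3) mod 4)_aug`. -/
def Urel : MRel := fun x y =>
  (∃ n : ZMod 12, x = maj n ∧ y = aug (m4 n)) ∨
  (∃ n : ZMod 12, x = aug (m4 n) ∧ y = maj n) ∨
  (∃ n : ZMod 12, x = mino n ∧ y = aug (m4 (n + 3))) ∨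
  (∃ n : ZMod 12, x = aug (m4 (n + 3)) ∧ y = mino n)

/-- The relation `𝒫`: the symmetric relation relating exactly `n_M` with `n_m`,
and each augmented triad with itself. -/
def Prel : MRel := fun x y =>
  (∃ n : ZMod 12, x = maj n ∧ y = mino n) ∨
  (∃ n : ZMod 12, x = mino n ∧ y = maj n) ∨
  (∃ k : ZMod 4, x = aug k ∧ y = aug k)

/-- The relation `ℒ`: the symmetric relation relating exactly `n_M` with `(n+4)_m`,
and each augmented triad with itself. -/
def Lrel : MRel := fun x y =>
  (∃ n : ZMod 12, x = maj n ∧ y = mino (n + 4)) ∨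
  (∃ n : ZMod 12, x = mino (n + 4) ∧ y = maj n) ∨
  (∃ k : ZMod 4, x = aug k ∧ y = aug k)

/-- Douthett's parsimonious relation `𝒮 = P_{1,0}` on major, minor and augmented triads. -/
def Srel : MRel := fun x y =>
  (∃ n : ZMod 12, x = maj n ∧ y = mino n) ∨
  (∃ n : ZMod 12, x = mino n ∧ y = maj n) ∨
  (∃ n : ZMod 12, x = maj n ∧ y = mino (n + 4)) ∨
  (∃ n : ZMod 12, x = mino (n + 4) ∧ y = maj n) ∨
  (∃ n : ZMod 12, x = maj n ∧ y = aug (m4 n)) ∨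
  (∃ n : ZMod 12, x = aug (m4 n) ∧ y = maj n) ∨
  (∃ n : ZMod 12, x = mino n ∧ y = aug (m4 (n + 3))) ∨
  (∃ n : ZMod 12, x = aug (m4 (n + 3)) ∧ y = mino n)

/-- Douthett's parsimonious relation `𝒯 = P_{2,0}` on major, minor and augmented triads. -/
def Trel : MRel := fun x y =>
  (∃ n : ZMod 12, x = maj n ∧ y = maj (n + 4)) ∨
  (∃ n : ZMod 12, x = maj n ∧ y = maj (n + 8)) ∨
  (∃ n : ZMod 12, x = maj n ∧ y = mino (n + 1)) ∨
  (∃ n : ZMod 12, x = mino (n + 1) ∧ y = maj n) ∨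
  (∃ n : ZMod 12, x = maj n ∧ y = mino (n + 5)) ∨
  (∃ n : ZMod 12, x = mino (n + 5) ∧ y = maj n) ∨
  (∃ n : ZMod 12, x = maj n ∧ y = aug (m4 (n + 3))) ∨
  (∃ n : ZMod 12, x = aug (m4 (n + 3)) ∧ y = maj n) ∨
  (∃ n : ZMod 12, x = mino n ∧ y = mino (n + 4)) ∨
  (∃ n : ZMod 12, x = mino n ∧ y = mino (n + 8)) ∨
  (∃ n : ZMod 12, x = mino n ∧ y = aug (m4 n)) ∨
  (∃ n : ZMod 12, x = aug (m4 n) ∧ y = mino n)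

/-- Action of the dihedral group on triads. -/
def actD : DihedralGroup 3 → Htriads → Htriads
  | .r i, Sum.inl n => Sum.inl (n + 4 * (i.val : ZMod 12))
  | .r i, Sum.inr (Sum.inl n) => Sum.inr (Sum.inl (n - 4 * (i.val : ZMod 12)))
  | .sr i, Sum.inl n => Sum.inr (Sum.inl (n - 4 * (i.val : ZMod 12)))
  | .sr i, Sum.inr (Sum.inl n) => Sum.inl (n + 4 * (i.val : ZMod 12))
  | _, Sum.inr (Sum.inr k) => Sum.inr (Sum.inr k)

theorem cast_add3 : ∀ i j : ZMod 3,
    (4 * ((i + j).val : ZMod 12)) = 4 * (i.val : ZMod 12) + 4 * (j.val : ZMod 12) := by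
  decide

theorem cast_sub3 : ∀ i j : ZMod 3,
    (4 * ((i - j).val : ZMod 12)) = 4 * (i.val : ZMod 12) - 4 * (j.val : ZMod 12) := by
  decide

theorem actD_mul (a b : DihedralGroup 3) (x : Htriads) :
    actD (a * b) x = actD b (actD a x) := by
  rcases a with i | i <;> rcases b with j | j <;> rcases x with n | n | n <;>
    simp only [DihedralGroup.r_mul_r, DihedralGroup.r_mul_sr, DihedralGroup.sr_mul_r,
      DihedralGroup.sr_mul_sr, actD, cast_add3, cast_sub3] <;> ring_nf

theorem mrel_mul (r s : MRel) (x z : Htriads) : (r * s) x z ↔ ∃ y, r x y ∧ s y z := Iff.rfl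

theorem mrel_one (x z : Htriads) : (1 : MRel) x z ↔ x = z := Iff.rfl

/-- The representation of the dihedral group by relations. -/
def phiD : DihedralGroup 3 →* MRel where
  toFun a := fun x y => actD a x = y
  map_one' := by
    funext x y
    apply propext
    rw [mrel_one]
    have : actD 1 x = x := by
      rw [DihedralGroup.one_def]
      rcases x with n | n | n <;> simp [actD]
    rw [this]
  map_mul' a b := by
    funext x y
    apply propext
    rw [mrel_mul, actD_mul]
    simp

theorem phiD_apply (a : DihedralGroup 3) (x y : Htriads) : phiD a x y ↔ actD a x = y := Iff.rfl

theorem phiD_inj : Function.Injective phiD := by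
  intro a b h
  have h1 : actD b (Sum.inl 0) = actD a (Sum.inl 0) := by
    have : phiD a (Sum.inl 0) (actD a (Sum.inl 0)) := rfl
    rw [h] at this
    exact this
  clear h
  revert a b
  have key : ∀ i j : ZMod 3, (4 * (i.val : ZMod 12)) = 4 * (j.val : ZMod 12) → i = j := by decide
  rintro (i | i) (j | j) h
  · simp [actD] at h
    rw [key _ _ h]
  · simp [actD] at h
  · simp [actD] at h
  · simp [actD] at h
    rw [key _ _ h]

theorem Prel_eq : Prel = phiD (.sr 0) := by
  funext x y
  apply propext
  rw [phiD_apply]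
  rcases x with n | n | n <;> simp [Prel, actD, maj, mino, aug, eq_comm]

theorem Lrel_eq : Lrel = phiD (.sr 2) := by
  have h : (4 * (((2 : ZMod 3).val : ℕ) : ZMod 12)) = -4 := by decide
  funext x y
  apply propext
  rw [phiD_apply]
  rcases x with n | n | n
  · simp only [Lrel, actD, maj, mino, aug, h]
    simp [eq_comm]
  · simp only [Lrel, actD, maj, mino, aug, h]
    constructor
    · rintro (⟨m, h1, h2⟩ | ⟨m, h1, h2⟩ | ⟨m, h1, h2⟩)
      · cases h1
      · simp at h1
        rw [h2, h1]; simp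
      · cases h1
    · rintro rfl
      exact Or.inr (Or.inl ⟨n + -4, by simp, rfl⟩)
  · simp [Lrel, actD, maj, mino, aug, eq_comm]

theorem set_eq (x : MRel) :
    x ∈ ({1, Lrel, Prel, Lrel * Prel, Prel * Lrel, Lrel * Prel * Lrel} : Set MRel) ↔
      ∃ a, phiD a = x := by
  rw [Prel_eq, Lrel_eq, ← map_mul, ← map_mul, ← map_mul, ← map_one phiD]
  simp only [Set.mem_insert_iff, Set.mem_singleton_iff]
  constructor
  · rintro (h | h | h | h | h | h) <;> exact ⟨_, h.symm⟩
  · rintro ⟨a, rfl⟩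
    simp only [phiD_inj.eq_iff]
    revert a
    decide

theorem U_no_inv (r : MRel) : Urel * r ≠ 1 := by
  intro h
  have h0 : (Urel * r) (maj 0) (maj 0) := by rw [h]; exact rfl
  obtain ⟨y, hy, hr⟩ := h0
  have hy' : y = aug (m4 0) := by
    rcases hy with ⟨n, h1, h2⟩ | ⟨n, h1, h2⟩ | ⟨n, h1, h2⟩ | ⟨n, h1, h2⟩
    · cases h1; exact h2
    · cases h1
    · cases h1
    · cases h1
  have h4 : (Urel * r) (maj 4) (maj 0) := by
    refine ⟨y, Or.inl ⟨4, rfl, ?_⟩, hr⟩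
    rw [hy']
    have : m4 0 = m4 4 := by decide
    rw [this]
  rw [h] at h4
  have h5 : (4 : ZMod 12) = 0 := Sum.inl.inj h4
  exact absurd h5 (by decide)

theorem unit_range (x : MRel) (hx : x ∈ Submonoid.closure ({Urel, Prel, Lrel} : Set MRel)) :
    (∃ y, x * y = 1) → ∃ a, phiD a = x := by
  have aux : ∀ (d : DihedralGroup 3) (y : MRel), ((∃ z, y * z = 1) → ∃ a, phiD a = y) →
      (∃ z, phiD d * y * z = 1) → ∃ a, phiD a = phiD d * y := by
    rintro d y ih ⟨z, hz⟩
    obtain ⟨a, ha⟩ := ih ⟨z * phiD d, by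
      have e : phiD d⁻¹ * (phiD d * y * z) * phiD d = phiD d⁻¹ * 1 * phiD d := by rw [hz]
      have e2 : phiD d⁻¹ * phiD d = 1 := by rw [← map_mul]; simp
      rw [mul_one, e2, mul_assoc (phiD d), ← mul_assoc (phiD d⁻¹), e2, one_mul] at e
      rw [← mul_assoc]; exact e⟩
    exact ⟨d * a, by rw [map_mul, ha]⟩
  induction hx using Submonoid.closure_induction_left with
  | one => exact fun _ => ⟨1, map_one _⟩
  | mul_left g hg y hy ih =>
    rcases hg with rfl | rfl | rfl
    · rintro ⟨z, hz⟩
      rw [mul_assoc] at hz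
      exact absurd hz (U_no_inv _)
    · rw [Prel_eq]; exact aux _ y ih
    · rw [Lrel_eq]; exact aux _ y ih

theorem phiD_mem (a : DihedralGroup 3) :
    phiD a ∈ Submonoid.closure ({Urel, Prel, Lrel} : Set MRel) := by
  have hP : Prel ∈ Submonoid.closure ({Urel, Prel, Lrel} : Set MRel) :=
    Submonoid.subset_closure (by simp)
  have hL : Lrel ∈ Submonoid.closure ({Urel, Prel, Lrel} : Set MRel) :=
    Submonoid.subset_closure (by simp)
  rcases (set_eq (phiD a)).2 ⟨a, rfl⟩ with h | h | h | h | h | h <;> rw [h]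
  · exact one_mem _
  · exact hL
  · exact hP
  · exact mul_mem hL hP
  · exact mul_mem hP hL
  · exact mul_mem (mul_mem hL hP) hL

/-- the units of the submonoid `M_UPL` generated by `{U, P, L}` are exactly
`{1, L, P, L·P, P·L, L·P·L}`, and the group of units is isomorphic to the dihedral group
of order 6. -/
theorem stmt7 :
    (∀ x : (Submonoid.closure ({Urel, Prel, Lrel} : Set MRel)), IsUnit x ↔
      (x : MRel) ∈ ({1, Lrel, Prel, Lrel * Prel, Prel * Lrel, Lrel * Prel * Lrel} : Set MRel)) ∧
    Nonempty ((Submonoid.closure ({Urel, Prel, Lrel} : Set MRel))ˣ ≃* DihedralGroup 3) := by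
  have hu : ∀ x : (Submonoid.closure ({Urel, Prel, Lrel} : Set MRel)), IsUnit x →
      ∃ a, phiD a = (x : MRel) := by
    rintro x ⟨u, rfl⟩
    refine unit_range _ (u : Submonoid.closure ({Urel, Prel, Lrel} : Set MRel)).2
      ⟨((u⁻¹ : (Submonoid.closure ({Urel, Prel, Lrel} : Set MRel))ˣ) :
        Submonoid.closure ({Urel, Prel, Lrel} : Set MRel)), ?_⟩
    exact congrArg Subtype.val u.mul_inv
  let ψ := (phiD.codRestrict (Submonoid.closure ({Urel, Prel, Lrel} : Set MRel))
    phiD_mem).toHomUnits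
  have hψ : ∀ a, ((ψ a : Submonoid.closure ({Urel, Prel, Lrel} : Set MRel)) : MRel) = phiD a :=
    fun a => rfl
  refine ⟨fun x => ⟨fun h => (set_eq _).2 (hu x h), fun h => ?_⟩, ?_⟩
  · obtain ⟨a, ha⟩ := (set_eq _).1 h
    exact ⟨ψ a, Subtype.ext ((hψ a).trans ha)⟩
  · refine ⟨(MulEquiv.ofBijective ψ ⟨fun a b h => phiD_inj ?_, fun u => ?_⟩).symm⟩
    · rw [← hψ, ← hψ, h]
    · obtain ⟨a, ha⟩ := hu u u.isUnit
      exact ⟨a, Units.ext (Subtype.ext ((hψ a).trans ha))⟩
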